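/- Let A be a d×d rational matrix. The following are equivalent: (a) the characteristic polynomial of A has integer coefficients; (b) the minimal polynomial of A has integer coefficients; (c) every complex root of the characteristic polynomial of A is integral over ℤ (an algebraic integer); (d) there exists an integer m ≥ 1 such that for every n ∈ ℕ, every entry of m·A^n is an integer; (e) there exist a d×d integer matrix B and a d×d integer matrix P that is invertible as a rational matrix such that A = P B P⁻¹ over ℚ; (f) for every k ∈ ℕ, the trace of A^k is an integer. -/

import Mathlib

/-!
Everything turns on the integrality of `A` over `ℤ`. An integral `A` generates a finitely generated
ring `ℤ[A]`, so `ℤ[A] • ℤᵈ` is an `A`-stable lattice in `ℚᵈ`; in a basis of that lattice `A` becomes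
an integer matrix. Conversely, bounded denominators confine the powers of `A` to a finitely
generated `ℤ`-module, which forces integrality.

For traces, choose a polynomial `g` that is `1` at an eigenvalue `x` and `0` at the others. Then
`tr (g(A) Aᵏ) = m xᵏ`, where `m` is the multiplicity of `x`. The left side lies in the `ℤ`-span of
the coefficients of `g`, so the powers of `x` lie in a finitely generated `ℤ`-module as well.
-/

open Module Polynomial

section Integral

variable {R : Type*} [CommRing R]

theorem isIntegral_of_forall_pow_mem_of_fg [IsNoetherianRing R] {A : Type*} [Ring A] [Algebra R A]
    {x : A} {N : Submodule R A} (hN : N.FG) (hx : ∀ k : ℕ, x ^ k ∈ N) : IsIntegral R x := by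
  have hle : Subalgebra.toSubmodule (Algebra.adjoin R {x}) ≤ N := by
    rw [Algebra.adjoin_eq_span, Submodule.span_le]
    intro y hy
    obtain ⟨k, rfl⟩ := Submonoid.mem_closure_singleton.mp hy
    exact hx k
  exact .of_mem_of_fg _ (hN.of_le hle) x (Algebra.self_mem_adjoin_singleton R x)

theorem isIntegral_of_aeval_eq_zero_of_mem_lifts {S A : Type*} [CommRing S] [Algebra R S] [Ring A]
    [Algebra R A] [Algebra S A] [IsScalarTower R S A] {x : A} {p : S[X]} (hp : p.Monic)
    (hlifts : p ∈ lifts (algebraMap R S)) (hx : aeval x p = 0) : IsIntegral R x := by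
  obtain ⟨q, rfl, -, hq⟩ := lifts_and_natDegree_eq_and_monic hlifts hp
  exact ⟨q, hq, by rwa [aeval_map_algebraMap] at hx⟩

variable {K : Type*} [Field K] [Algebra R K] [IsIntegrallyClosed R] [IsFractionRing R K]

theorem minpoly_mem_lifts_of_isIntegral {A : Type*} [Ring A] [Algebra R A] [Algebra K A]
    [IsScalarTower R K A] {x : A} (hx : IsIntegral R x) :
    minpoly K x ∈ lifts (algebraMap R K) := by
  have hmonic : (minpoly K x).Monic := minpoly.monic hx.tower_top
  obtain ⟨p, hp, hpx⟩ := hx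
  have hdvd : minpoly K x ∣ p.map (algebraMap R K) :=
    minpoly.dvd K x (by rwa [aeval_map_algebraMap])
  obtain ⟨q, hq⟩ := IsIntegrallyClosed.eq_map_mul_C_of_dvd K hp hdvd
  exact (mem_lifts _).mpr ⟨q, by simpa [hmonic.leadingCoeff] using hq⟩

theorem mem_lifts_of_forall_root_isIntegral {L : Type*} [Field L] [Algebra R L] [Algebra K L]
    [IsScalarTower R K L] {p : K[X]} (hp : p.Monic) (hsplits : (p.map (algebraMap K L)).Splits)
    (hroots : ∀ x : L, aeval x p = 0 → IsIntegral R x) : p ∈ lifts (algebraMap R K) := by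
  refine (lifts_iff_coeff_lifts p).mpr fun k => IsIntegrallyClosed.isIntegral_iff.mp ?_
  have hcoeff : IsIntegral R ((p.map (algebraMap K L)).coeff k) := by
    refine isIntegral_coeff_of_factors _ ?_ hsplits (fun x hx => hroots x ?_) k
    · rw [(hp.map _).leadingCoeff]
      exact isIntegral_one
    · rwa [IsRoot, eval_map_algebraMap] at hx
  rwa [coeff_map, isIntegral_algebraMap_iff (algebraMap K L).injective] at hcoeff

end Integral

section Lattice

variable {R : Type*} [CommRing R]

theorem exists_fg_le_smul_mem_of_isIntegral {A M : Type*} [Ring A] [Algebra R A] [AddCommGroup M]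
    [Module R M] [Module A M] [IsScalarTower R A M] {a : A} (ha : IsIntegral R a)
    {N : Submodule R M} (hN : N.FG) :
    ∃ L : Submodule R M, L.FG ∧ N ≤ L ∧ ∀ v ∈ L, a • v ∈ L := by
  let act : A →ₗ[R] M →ₗ[R] M := (Algebra.lsmul R R M).toLinearMap
  let S := Subalgebra.toSubmodule (Algebra.adjoin R {a})
  let L := Submodule.map₂ act S N
  have hstable : L ≤ L.comap (act a) := Submodule.map₂_le.mpr fun s hs v hv => by
    rw [Submodule.mem_comap, show act a (act s v) = act (a * s) v from smul_smul a s v]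
    exact Submodule.apply_mem_map₂ act
      (Subalgebra.mul_mem _ (Algebra.self_mem_adjoin_singleton R a) hs) hv
  refine ⟨L, ha.fg_adjoin_singleton.map₂ act hN, fun v hv => ?_, hstable⟩
  exact one_smul A v ▸ Submodule.apply_mem_map₂ act (one_mem (Algebra.adjoin R {a})) hv

theorem exists_isLattice_apply_mem_of_isIntegral {K V : Type*} [CommRing K] [Algebra R K]
    [AddCommGroup V] [Module R V] [Module K V] [IsScalarTower R K V] [Module.Finite K V]
    {f : End K V} (hf : IsIntegral R f) :
    ∃ L : Submodule R V, L.IsLattice K ∧ ∀ v ∈ L, f v ∈ L := by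
  obtain ⟨s, hs⟩ := Module.Finite.fg_top (R := K) (M := V)
  obtain ⟨L, hL, hsL, hfL⟩ :=
    exists_fg_le_smul_mem_of_isIntegral hf (Submodule.fg_span s.finite_toSet)
  refine ⟨L, ⟨hL, top_unique ?_⟩, hfL⟩
  exact hs.symm.trans_le (Submodule.span_mono (Submodule.span_le.mp hsL))

variable {K : Type*} [Field K] [Algebra R K] [IsFractionRing R K]

theorem exists_ne_zero_map_eq_smul {m n : Type*} [Finite m] [Finite n] [Nontrivial R]
    (Q : Matrix m n K) :
    ∃ r : R, r ≠ 0 ∧ ∃ P : Matrix m n R, P.map (algebraMap R K) = algebraMap R K r • Q := by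
  obtain ⟨r, hr⟩ := IsLocalization.exist_integer_multiples_of_finite (nonZeroDivisors R)
    fun ij : m × n => Q ij.1 ij.2
  choose P hP using fun i j => hr (i, j)
  refine ⟨r, nonZeroDivisors.coe_ne_zero r, Matrix.of P, ?_⟩
  ext i j
  simpa [Algebra.smul_def] using hP i j

theorem toMatrix_extendOfIsLattice {ι V : Type*} [Fintype ι] [DecidableEq ι] [AddCommGroup V]
    [Module R V] [Module K V] [IsScalarTower R K V] {L : Submodule R V} [L.IsLattice K]
    (b : Basis ι R L) {f : End K V} {g : End R L} (hg : ∀ v : L, (g v : V) = f v) :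
    LinearMap.toMatrix (b.extendOfIsLattice K) (b.extendOfIsLattice K) f =
      (LinearMap.toMatrix b b g).map (algebraMap R K) := by
  set c := b.extendOfIsLattice K
  have hrepr (v : L) (i : ι) : c.repr v i = algebraMap R K (b.repr v i) := by
    have hsum : ∑ j, algebraMap R K (b.repr v j) • c j = v := by
      simp only [c, Basis.extendOfIsLattice_apply, algebraMap_smul]
      simpa only [map_sum, map_smul, Submodule.subtype_apply] using
        congrArg L.subtype (b.sum_repr v)
    rw [← hsum, c.repr_sum_self]
  ext i j
  rw [LinearMap.toMatrix_apply, Matrix.map_apply, LinearMap.toMatrix_apply, ← hrepr,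
    hg, Basis.extendOfIsLattice_apply]

end Lattice

section Semiconj

variable {n : Type*} [Fintype n] [DecidableEq n]

theorem semiconjBy_iff_eq_mul_mul_inv {K : Type*} [CommRing K] {P B A : Matrix n n K}
    (hP : IsUnit P.det) : SemiconjBy P B A ↔ A = P * B * P⁻¹ := by
  constructor
  · intro h
    rw [h.eq, Matrix.mul_nonsing_inv_cancel_right _ _ hP]
  · rintro rfl
    exact (Matrix.nonsing_inv_mul_cancel_right _ _ hP).symm

theorem trace_eq_of_semiconjBy {K : Type*} [CommRing K] {P B A : Matrix n n K}
    (hP : IsUnit P.det) (h : SemiconjBy P B A) : A.trace = B.trace := by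
  rw [(semiconjBy_iff_eq_mul_mul_inv hP).mp h, Matrix.trace_conj (P.isUnit_iff_isUnit_det.mpr hP)]

theorem trace_map_pow {R S : Type*} [CommRing R] [CommRing S] (f : R →+* S) (A : Matrix n n R)
    (k : ℕ) : (A.map f ^ k).trace = f (A ^ k).trace := by
  rw [← Matrix.map_pow]
  exact (AddMonoidHom.map_trace f _).symm

variable {R K : Type*} [CommRing R]

theorem det_smul_pow_eq_map_of_semiconjBy_map [CommRing K] {f : R →+* K} {P B : Matrix n n R}
    {A : Matrix n n K} (h : SemiconjBy (P.map f) (B.map f) A) (k : ℕ) :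
    f P.det • A ^ k = (P * B ^ k * P.adjugate).map f := by
  have hdet : P.map f * P.adjugate.map f = f P.det • 1 := by
    rw [← Matrix.map_mul, P.mul_adjugate]
    ext i j
    simp [Matrix.one_apply, apply_ite f]
  calc f P.det • A ^ k = A ^ k * (P.map f * P.adjugate.map f) := by
        rw [hdet, Matrix.mul_smul, Matrix.mul_one]
    _ = P.map f * (B ^ k).map f * P.adjugate.map f := by
        rw [← Matrix.mul_assoc, Matrix.map_pow, (h.pow_right k).eq]
    _ = (P * B ^ k * P.adjugate).map f := by simp only [Matrix.map_mul]

theorem trace_pow_eq_of_semiconjBy_map [CommRing K] {f : R →+* K} {P B : Matrix n n R}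
    {A : Matrix n n K} (hP : IsUnit (P.map f).det) (h : SemiconjBy (P.map f) (B.map f) A) (k : ℕ) :
    (A ^ k).trace = f (B ^ k).trace := by
  rw [trace_eq_of_semiconjBy hP (h.pow_right k), trace_map_pow]

variable [IsDomain R] [IsPrincipalIdealRing R] [Field K] [Algebra R K] [IsFractionRing R K]

theorem exists_semiconjBy_map_of_isIntegral {A : Matrix n n K} (hA : IsIntegral R A) :
    ∃ (B : Matrix n n R) (Q : Matrix n n K), Q.det ≠ 0 ∧
      SemiconjBy Q (B.map (algebraMap R K)) A := by
  have hf : IsIntegral R (Matrix.toLin' A) :=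
    hA.map ((Matrix.toLinAlgEquiv' (R := K) (n := n)).toAlgHom.restrictScalars R)
  obtain ⟨L, hL, hstable⟩ := exists_isLattice_apply_mem_of_isIntegral hf
  let b : Basis n R L := (Module.Free.chooseBasis R L).reindex <| Fintype.equivOfCardEq <| by
    rw [← Module.finrank_eq_card_chooseBasisIndex, Submodule.IsLattice.finrank_of_pi K L]
  let c := b.extendOfIsLattice K
  let e := Pi.basisFun K n
  have hdet : (e.toMatrix c).det ≠ 0 := by
    have := e.invertibleToMatrix c
    exact (Matrix.isUnit_det_of_invertible _).ne_zero
  let g : End R L := ((Matrix.toLin' A).restrictScalars R).restrict hstable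
  have hg : LinearMap.toMatrix c c (Matrix.toLin' A) =
      (LinearMap.toMatrix b b g).map (algebraMap R K) :=
    toMatrix_extendOfIsLattice b fun _ => rfl
  refine ⟨LinearMap.toMatrix b b g, e.toMatrix c, hdet, ?_⟩
  calc e.toMatrix c * (LinearMap.toMatrix b b g).map (algebraMap R K)
      = LinearMap.toMatrix c e (Matrix.toLin' A) := by
        rw [← hg, basis_toMatrix_mul_linearMap_toMatrix]
    _ = LinearMap.toMatrix e e (Matrix.toLin' A) * e.toMatrix c :=
        (linearMap_toMatrix_mul_basis_toMatrix c e e _).symm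
    _ = A * e.toMatrix c := by
        rw [LinearMap.toMatrix_eq_toMatrix', LinearMap.toMatrix'_toLin']

theorem exists_map_semiconjBy_map_of_isIntegral {A : Matrix n n K} (hA : IsIntegral R A) :
    ∃ B P : Matrix n n R, (P.map (algebraMap R K)).det ≠ 0 ∧
      SemiconjBy (P.map (algebraMap R K)) (B.map (algebraMap R K)) A := by
  obtain ⟨B, Q, hQ, h⟩ := exists_semiconjBy_map_of_isIntegral hA
  obtain ⟨r, hr, P, hP⟩ := exists_ne_zero_map_eq_smul (R := R) Q
  refine ⟨B, P, ?_, ?_⟩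
  · rw [hP, Matrix.det_smul]
    exact mul_ne_zero (pow_ne_zero _ (IsFractionRing.to_map_eq_zero_iff.not.mpr hr)) hQ
  · rw [hP, SemiconjBy, Matrix.smul_mul, Matrix.mul_smul, h.eq]

end Semiconj

section Denominators

variable {R K n : Type*} [CommRing R] [IsNoetherianRing R] [Field K] [Algebra R K]
  [FaithfulSMul R K] [Fintype n] [DecidableEq n]

theorem isIntegral_of_forall_mul_pow_apply_mem_range {A : Matrix n n K} {r : R} (hr : r ≠ 0)
    (h : ∀ (k : ℕ) (i j : n), algebraMap R K r * (A ^ k) i j ∈ (algebraMap R K).range) :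
    IsIntegral R A := by
  have hr' : algebraMap R K r ≠ 0 := (FaithfulSMul.algebraMap_eq_zero_iff R K).not.mpr hr
  let divide : Matrix n n R →ₗ[R] Matrix n n K :=
    (algebraMap R K r)⁻¹ • (Algebra.linearMap R K).mapMatrix
  refine isIntegral_of_forall_pow_mem_of_fg (N := LinearMap.range divide)
    (LinearMap.range_eq_map divide ▸ Module.Finite.fg_top.map divide) fun k => ?_
  choose B hB using h k
  refine ⟨Matrix.of B, ?_⟩
  ext i j
  simp [divide, hB, hr']

end Denominators

section Trace

variable {n K : Type*} [Fintype n] [DecidableEq n]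

theorem aeval_charpoly_eq_zero_iff_isRoot {L : Type*} [CommRing K] [CommRing L] [Algebra K L]
    (A : Matrix n n K) (x : L) :
    aeval x A.charpoly = 0 ↔ (A.map (algebraMap K L)).charpoly.IsRoot x := by
  rw [Matrix.charpoly_map, IsRoot, eval_map_algebraMap]

theorem trace_aeval_mul_pow_mem_span_coeff {R : Type*} [CommRing R] [CommRing K] [Algebra R K]
    {A : Matrix n n K} (h : ∀ k : ℕ, (A ^ k).trace ∈ (algebraMap R K).range) (g : K[X]) (k : ℕ) :
    (aeval A g * A ^ k).trace ∈ Submodule.span R (g.coeff '' g.support) := by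
  rw [aeval_def, eval₂_eq_sum, Polynomial.sum, Finset.sum_mul, Matrix.trace_sum]
  refine Submodule.sum_mem _ fun i hi => ?_
  obtain ⟨r, hr⟩ := h (i + k)
  rw [← Algebra.smul_def, smul_mul_assoc, ← pow_add, Matrix.trace_smul, ← hr, smul_eq_mul,
    mul_comm, ← Algebra.smul_def]
  exact Submodule.smul_mem _ r (Submodule.subset_span (Set.mem_image_of_mem _ hi))

variable [Field K] [IsAlgClosed K]

theorem card_roots_charpoly (A : Matrix n n K) : A.charpoly.roots.card = Fintype.card n := by
  rw [← (IsAlgClosed.splits A.charpoly).natDegree_eq_card_roots, A.charpoly_natDegree_eq_dim]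

theorem det_add_algebraMap_eq_prod_roots_charpoly (A : Matrix n n K) (a : K) :
    (A + algebraMap K _ a).det = (A.charpoly.roots.map (· + a)).prod := by
  have hneg : A + algebraMap K _ a = -(Matrix.scalar n (-a) - A) := by
    simp [Matrix.algebraMap_eq_diagonal, Pi.algebraMap_def, ← Matrix.diagonal_neg]
  have heval : A.charpoly.eval (-a) = (A.charpoly.roots.map fun x => -(x + a)).prod := by
    nth_rw 1 [(IsAlgClosed.splits A.charpoly).eq_prod_roots_of_monic A.charpoly_monic]
    rw [eval_multiset_prod, Multiset.map_map]
    exact congrArg _ (Multiset.map_congr rfl fun x _ => by simp [sub_eq_add_neg, add_comm])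
  rw [hneg, Matrix.det_neg, ← Matrix.eval_charpoly, heval, ← card_roots_charpoly A,
    ← Multiset.card_map, ← Multiset.prod_map_neg, Multiset.map_map]
  simp

theorem det_aeval_eq_prod_roots_charpoly (A : Matrix n n K) (g : K[X]) :
    (aeval A g).det = (A.charpoly.roots.map g.eval).prod := by
  induction IsAlgClosed.splits g using Submonoid.closure_induction with
  | mem g hg =>
    obtain ⟨a, rfl⟩ | ⟨a, rfl⟩ := hg
    · simp [Matrix.algebraMap_eq_diagonal, card_roots_charpoly]
    · simp [det_add_algebraMap_eq_prod_roots_charpoly]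
  | one => simp
  | mul g h _ _ hg hh => simp [Matrix.det_mul, hg, hh]

theorem roots_charpoly_aeval (A : Matrix n n K) (g : K[X]) :
    (aeval A g).charpoly.roots = A.charpoly.roots.map g.eval := by
  have hprod : (aeval A g).charpoly = ((A.charpoly.roots.map g.eval).map (X - C ·)).prod := by
    refine Polynomial.funext fun t => ?_
    have hdet := det_aeval_eq_prod_roots_charpoly A (C t - g)
    rw [Matrix.eval_charpoly, eval_multiset_prod, Multiset.map_map, Multiset.map_map]
    simpa [Matrix.algebraMap_eq_diagonal, Pi.algebraMap_def] using hdet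
  rw [hprod, roots_multiset_prod_X_sub_C]

theorem trace_aeval_eq_sum_roots_charpoly (A : Matrix n n K) (g : K[X]) :
    (aeval A g).trace = (A.charpoly.roots.map g.eval).sum := by
  rw [Matrix.trace_eq_sum_roots_charpoly, roots_charpoly_aeval]

theorem exists_forall_trace_aeval_mul_pow_eq_pow [CharZero K] {A : Matrix n n K} {x : K}
    (hx : A.charpoly.IsRoot x) : ∃ g : K[X], ∀ k : ℕ, (aeval A g * A ^ k).trace = x ^ k := by
  classical
  set s := A.charpoly.roots
  have hxs : x ∈ s := (mem_roots A.charpoly_monic.ne_zero).mpr hx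
  have hcount : (s.count x : K) ≠ 0 :=
    Nat.cast_ne_zero.mpr (Multiset.count_ne_zero.mpr hxs)
  let ℓ := Lagrange.basis s.toFinset id x
  have hℓ : ℓ.eval x = 1 :=
    Lagrange.eval_basis_self (v := id) Function.injective_id.injOn (Multiset.mem_toFinset.mpr hxs)
  have hℓ_of_ne (y : K) (hyx : y ≠ x) (hy : y ∈ s) : ℓ.eval y = 0 :=
    Lagrange.eval_basis_of_ne (v := id) hyx.symm (Multiset.mem_toFinset.mpr hy)
  refine ⟨C (s.count x : K)⁻¹ * ℓ, fun k => ?_⟩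
  calc (aeval A (C (s.count x : K)⁻¹ * ℓ) * A ^ k).trace
      = (aeval A (C (s.count x : K)⁻¹ * ℓ * X ^ k)).trace := by
        rw [map_mul _ _ (X ^ k), aeval_X_pow]
    _ = (s.map (C (s.count x : K)⁻¹ * ℓ * X ^ k).eval).sum := trace_aeval_eq_sum_roots_charpoly A _
    _ = s.count x • (C (s.count x : K)⁻¹ * ℓ * X ^ k).eval x :=
        Multiset.sum_map_eq_nsmul_single x fun y hyx hy => by simp [hℓ_of_ne y hyx hy]
    _ = x ^ k := by simp [hℓ, hcount]

theorem isIntegral_of_isRoot_charpoly_of_trace_pow_mem_range {R : Type*} [CommRing R]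
    [IsNoetherianRing R] [Algebra R K] [CharZero K] {A : Matrix n n K}
    (h : ∀ k : ℕ, (A ^ k).trace ∈ (algebraMap R K).range) {x : K} (hx : A.charpoly.IsRoot x) :
    IsIntegral R x := by
  obtain ⟨g, hg⟩ := exists_forall_trace_aeval_mul_pow_eq_pow hx
  have hfg := Submodule.fg_span (R := R) (g.support.finite_toSet.image g.coeff)
  exact isIntegral_of_forall_pow_mem_of_fg hfg fun k =>
    hg k ▸ trace_aeval_mul_pow_mem_span_coeff h g k

end Trace

theorem exists_int_ne_zero_iff_exists_nat_one_le {p : ℤ → Prop} (hp : ∀ m, p m → p (-m)) :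
    (∃ m : ℤ, m ≠ 0 ∧ p m) ↔ ∃ m : ℕ, 1 ≤ m ∧ p m := by
  constructor
  · rintro ⟨m, hm, h⟩
    refine ⟨m.natAbs, Int.natAbs_pos.mpr hm, ?_⟩
    obtain habs | habs := Int.natAbs_eq m
    · exact habs ▸ h
    · exact neg_eq_iff_eq_neg.mpr habs ▸ hp m h
  · rintro ⟨m, hm, h⟩
    exact ⟨m, by lia, h⟩

theorem stmt_11_general {R K L n : Type*} [CommRing R] [IsDomain R] [IsPrincipalIdealRing R]
    [Field K] [Algebra R K] [IsFractionRing R K] [Field L] [IsAlgClosed L] [CharZero L]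
    [Algebra R L] [Algebra K L] [IsScalarTower R K L] [Fintype n] [DecidableEq n]
    (A : Matrix n n K) :
    List.TFAE
      [ A.charpoly ∈ lifts (algebraMap R K),
        minpoly K A ∈ lifts (algebraMap R K),
        ∀ x : L, aeval x A.charpoly = 0 → IsIntegral R x,
        ∃ r : R, r ≠ 0 ∧
          ∀ (k : ℕ) (i j : n), algebraMap R K r * (A ^ k) i j ∈ (algebraMap R K).range,
        ∃ B P : Matrix n n R, (P.map (algebraMap R K)).det ≠ 0 ∧
          A = P.map (algebraMap R K) * B.map (algebraMap R K) * (P.map (algebraMap R K))⁻¹,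
        ∀ k : ℕ, (A ^ k).trace ∈ (algebraMap R K).range ] := by
  tfae_have 1 → 2 := fun h => minpoly_mem_lifts_of_isIntegral <|
    isIntegral_of_aeval_eq_zero_of_mem_lifts A.charpoly_monic h A.aeval_self_charpoly
  tfae_have 2 → 5 := fun h => by
    have hA : IsIntegral R A := isIntegral_of_aeval_eq_zero_of_mem_lifts
      (minpoly.monic (Algebra.IsIntegral.isIntegral A)) h (minpoly.aeval K A)
    obtain ⟨B, P, hP, hsemi⟩ := exists_map_semiconjBy_map_of_isIntegral hA
    exact ⟨B, P, hP, (semiconjBy_iff_eq_mul_mul_inv hP.isUnit).mp hsemi⟩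
  tfae_have 5 → 4 := fun ⟨B, P, hP, hA⟩ => by
    have hsemi := (semiconjBy_iff_eq_mul_mul_inv hP.isUnit).mpr hA
    refine ⟨P.det, fun h => hP ?_, fun k i j => ⟨(P * B ^ k * P.adjugate) i j, ?_⟩⟩
    · rw [← RingHom.mapMatrix_apply, ← RingHom.map_det, h, map_zero]
    · exact (congrFun₂ (det_smul_pow_eq_map_of_semiconjBy_map hsemi k) i j).symm
  tfae_have 4 → 2 := fun ⟨r, hr, h⟩ =>
    minpoly_mem_lifts_of_isIntegral (isIntegral_of_forall_mul_pow_apply_mem_range hr h)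
  tfae_have 5 → 6 := fun ⟨B, P, hP, hA⟩ k => ⟨(B ^ k).trace,
    (trace_pow_eq_of_semiconjBy_map hP.isUnit
      ((semiconjBy_iff_eq_mul_mul_inv hP.isUnit).mpr hA) k).symm⟩
  tfae_have 3 → 1 :=
    mem_lifts_of_forall_root_isIntegral A.charpoly_monic (IsAlgClosed.splits _)
  tfae_have 6 → 3 := fun h x hx => by
    refine isIntegral_of_isRoot_charpoly_of_trace_pow_mem_range (fun k => ?_)
      ((aeval_charpoly_eq_zero_iff_isRoot A x).mp hx)
    obtain ⟨r, hr⟩ := h k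
    exact ⟨r, by rw [trace_map_pow, ← hr, ← IsScalarTower.algebraMap_apply]⟩
  tfae_finish

theorem stmt_11 {d : ℕ} (A : Matrix (Fin d) (Fin d) ℚ) :
    List.TFAE
      [ (∀ k : ℕ, ∃ z : ℤ, A.charpoly.coeff k = (z : ℚ)),
        (∀ k : ℕ, ∃ z : ℤ, (minpoly ℚ A).coeff k = (z : ℚ)),
        (∀ x : ℂ, Polynomial.aeval x A.charpoly = 0 → IsIntegral ℤ x),
        (∃ m : ℕ, 1 ≤ m ∧ ∀ n : ℕ, ∀ i j, ∃ z : ℤ, (m : ℚ) * (A ^ n) i j = (z : ℚ)),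
        (∃ B P : Matrix (Fin d) (Fin d) ℤ, (P.map (Int.cast : ℤ → ℚ)).det ≠ 0 ∧
          A = P.map (Int.cast : ℤ → ℚ) * B.map (Int.cast : ℤ → ℚ) *
            (P.map (Int.cast : ℤ → ℚ))⁻¹),
        (∀ k : ℕ, ∃ z : ℤ, (A ^ k).trace = (z : ℚ)) ] := by
  have hden := exists_int_ne_zero_iff_exists_nat_one_le
    (p := fun m => ∀ (n : ℕ) (i j : Fin d),
      algebraMap ℤ ℚ m * (A ^ n) i j ∈ (algebraMap ℤ ℚ).range)
    fun m h n i j => by simpa only [map_neg, neg_mul, neg_mem_iff] using h n i j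
  have htfae := stmt_11_general (R := ℤ) (L := ℂ) A
  rw [hden] at htfae
  simpa only [lifts_iff_coeff_lifts, Set.mem_range, RingHom.mem_range, algebraMap_int_eq,
    Int.coe_castRingHom, eq_intCast, Int.cast_natCast, eq_comm] using htfae
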